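/- For all integers n ≥ 0 and t ≥ 0 and for each α ∈ {9, 14, 19, 39, 54}, B_{55}^{(55t+21)}(55n + α) ≡ 0 (mod 55). -/

import Mathlib

/-!
Write `f = ∏ (1 - q ^ m)`, which is the pentagonal number series, and let `g` be the generating
function of `55`-regular partitions, so that `g * f = f(q ^ 55)` and `B 55 r n` is the `n`-th
coefficient of `g ^ r`. For a prime `p ∣ 55` with `p ∣ r + s`, the identity `f ^ p = f(q ^ p)`
modulo `p` shows that `g ^ r` is `f ^ s` times a series in `q ^ p`; so `B 55 r N ≡ 0 (mod p)` as
soon as `f ^ s` vanishes modulo `p` in all degrees `≡ N (mod p)` (`B_modEq_zero`).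
Take `r = 55 t + 21`.

* `p = 11`, `s = 1`: the listed residues of `N` are those for which `24 N + 1` is a quadratic
  nonresidue, so no pentagonal number lies in the class (`coeff_pentagonalSeries_eleven`).
* `p = 5`, `s = 4`, `N ≡ 4 (mod 5)`: pentagonal numbers are `0, 1, 2` modulo `5`, so
  `f = P + Q + R` accordingly. The part of `f ^ 4` in degrees `≡ 4 (mod 5)` is
  `Q ^ 4 + 12 P Q² R + 6 P² R² ≡ (P R + Q²)²`, and `P R + Q² = 0` (`part_relation`).
  For this last identity, `2 f` is the sum of `χ(x) q ^ ((x² - 1) / 24)` over all integers `x`, with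
  `χ` the even quadratic character modulo `12`. Up to a factor, a coefficient of `P R + Q²` is then
  the sum of `χ(x) χ(y)` over the Gaussian integers `x + i y` of a given norm divisible by a given
  prime `2 ± i`; writing `x + i y = (2 + i)(u + i v)`, the swap of `u` and `v` preserves the norm
  and changes the sign of `χ(x) χ(y)`, so the sum vanishes (`sum_chi_eq_zero`).
-/

/-- `B ℓ r n` is the number of `ℓ`-regular `r`-multipartitions of `n`:
ordered `r`-tuples `(λ⁽¹⁾, …, λ⁽ʳ⁾)` of partitions, none of whose parts is
divisible by `ℓ`, whose sizes sum to `n`. -/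
def B (ℓ r n : ℕ) : ℕ :=
  Fintype.card {f : Fin r → Σ a : Fin (n + 1), Nat.Partition a //
    (∑ i, ((f i).1 : ℕ)) = n ∧ ∀ i, ∀ part ∈ (f i).2.parts, ¬ ℓ ∣ part}

open PowerSeries Finset

/-! ### Generating functions -/

/-- The generating function of multipartitions is the `r`-th power of that of partitions. -/
theorem B_eq_coeff (R : Type*) [CommRing R] (l r n : ℕ) :
    (B l r n : R) =
      coeff n ((PowerSeries.mk fun m ↦ (#(Nat.Partition.restricted m (¬ l ∣ ·)) : R)) ^ r) := by
  classical
  have hpow : ∀ φ : R⟦X⟧, φ ^ r = ∏ _i : Fin r, φ := fun φ ↦ by simp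
  rw [hpow, coeff_prod]
  simp only [coeff_mk]
  rw [B, Fintype.card_subtype]
  rw [card_eq_sum_card_fiberwise
    (f := fun f : Fin r → Σ a : Fin (n + 1), Nat.Partition a ↦
      Finsupp.equivFunOnFinite.symm (fun i ↦ ((f i).1 : ℕ)))
    (t := finsuppAntidiag univ n)
    (by intro f hf; simpa using (by simpa using hf : _ ∧ _).1)]
  push_cast
  refine sum_congr rfl fun c hc ↦ ?_
  rw [mem_finsuppAntidiag] at hc
  have hle : ∀ i, c i < n + 1 := fun i ↦
    Nat.lt_succ_of_le (hc.1 ▸ single_le_sum (f := fun i ↦ c i) (by simp) (mem_univ i))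
  rw [← Nat.cast_prod]
  congr 1
  -- The tuples with prescribed sizes `c` form a product of sets of restricted partitions.
  have hset : ({f ∈ ({f | (∑ i, ((f i).1 : ℕ)) = n ∧
        ∀ i, ∀ part ∈ (f i).2.parts, ¬ l ∣ part} :
          Finset (Fin r → Σ a : Fin (n + 1), Nat.Partition a)) |
        Finsupp.equivFunOnFinite.symm (fun i ↦ ((f i).1 : ℕ)) = c}) =
      Fintype.piFinset fun i ↦ (Nat.Partition.restricted (c i) (¬ l ∣ ·)).image
        fun p ↦ (⟨⟨c i, hle i⟩, p⟩ : Σ a : Fin (n + 1), Nat.Partition a) := by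
    ext f
    simp only [mem_filter, mem_univ, true_and, Fintype.mem_piFinset, mem_image,
      Nat.Partition.restricted]
    constructor
    · rintro ⟨⟨-, h⟩, rfl⟩ i
      exact ⟨(f i).2, h i, rfl⟩
    · intro h
      choose p hp hf using h
      obtain rfl : (fun i ↦ (⟨⟨c i, hle i⟩, p i⟩ : Σ a : Fin (n + 1), Nat.Partition a)) = f :=
        funext hf
      exact ⟨⟨hc.1, hp⟩, by ext i; simp⟩
  rw [hset, Fintype.card_piFinset]
  refine prod_congr rfl fun i _ ↦ card_image_of_injective _ fun p q hpq ↦ ?_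
  simpa using hpq

open scoped PowerSeries.WithPiTopology in
/-- The product formula for `l`-regular partitions, cleared of its denominator:
the pentagonal number series stands for `∏ (1 - q ^ m)`. -/
theorem genFun_mul_pentagonalSeries (R : Type*) [CommRing R] [NoZeroDivisors R]
    {l : ℕ} (hl : l ≠ 0) :
    (PowerSeries.mk fun m ↦ (#(Nat.Partition.restricted m (¬ l ∣ ·)) : R)) * pentagonalSeries R =
      expand l hl (pentagonalSeries R) := by
  let : TopologicalSpace R := ⊥
  have : DiscreteTopology R := ⟨rfl⟩
  rw [Nat.Partition.powerSeriesMk_card_restricted_eq_powerSeriesMk_card_countRestricted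
    (R := R) (Nat.pos_of_ne_zero hl)]
  have h1 := (Nat.Partition.hasProd_powerSeriesMk_card_countRestricted R
    (Nat.pos_of_ne_zero hl)).mul (WithPiTopology.hasProd_one_sub_X_pow R)
  have hcont : Continuous (expand l hl : R⟦X⟧ →ₐ[R] R⟦X⟧) := by
    rw [continuous_iff_continuousAt]
    intro φ
    rw [ContinuousAt, WithPiTopology.tendsto_iff_coeff_tendsto]
    intro d
    simp only [coeff_expand]
    split_ifs
    · exact (WithPiTopology.continuous_coeff R _).continuousAt
    · exact tendsto_const_nhds
  have h2 := (WithPiTopology.hasProd_one_sub_X_pow R).map (expand l hl : R⟦X⟧ →ₐ[R] R⟦X⟧) hcont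
  refine h1.unique ?_
  have hfun : (fun i : ℕ ↦ (∑ j ∈ range l, X ^ ((i + 1) * j)) * (1 - X ^ (i + 1) : R⟦X⟧)) =
      (expand l hl : R⟦X⟧ →ₐ[R] R⟦X⟧) ∘ fun i ↦ 1 - X ^ (i + 1) := by
    ext1 i
    simp only [pow_mul, geom_sum_mul_neg, Function.comp_apply, map_sub, map_one, map_pow, expand_X]
    rw [← pow_mul, ← pow_mul, mul_comm]
  rw [hfun]
  exact h2

theorem pow_char_eq_expand {p : ℕ} [hp : Fact p.Prime] (φ : (ZMod p)⟦X⟧) :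
    φ ^ p = expand p hp.out.ne_zero φ := by
  have h := MvPowerSeries.map_frobenius_expand (R := ZMod p) p hp.out.ne_zero (f := φ)
  rw [ZMod.frobenius_zmod, MvPowerSeries.map_id] at h
  exact h.symm

theorem coeff_expand_mul_eq_zero {R : Type*} [CommRing R] {p : ℕ} (hp : p ≠ 0) (φ ψ : R⟦X⟧) (N : ℕ)
    (h : ∀ m, m % p = N % p → coeff m ψ = 0) : coeff N (expand p hp φ * ψ) = 0 := by
  rw [coeff_mul]
  refine sum_eq_zero fun x hx ↦ ?_
  rw [HasAntidiagonal.mem_antidiagonal] at hx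
  by_cases hd : p ∣ x.1
  · rw [h x.2, mul_zero]
    obtain ⟨c, hc⟩ := hd
    simp [← hx, hc]
  · rw [coeff_expand_of_not_dvd _ _ _ hd, zero_mul]

theorem constantCoeff_pentagonalSeries (R : Type*) [CommRing R] :
    constantCoeff (pentagonalSeries R) = 1 := by
  have := coeff_pentagonalSeries_pentagonal R 0
  simpa [pentagonal_def] using this

/-- Modulo a prime `p` dividing `l` and `r + s`, the generating function of `B l r` is a series
in `q ^ p` times `(∏ (1 - q ^ m)) ^ s`. -/
theorem B_modEq_zero {p l r s N : ℕ} (hp : p.Prime) (hl : l ≠ 0) (hpl : p ∣ l) (hrs : p ∣ r + s)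
    (h : ∀ m, m % p = N % p → coeff m (pentagonalSeries (ZMod p) ^ s) = 0) :
    B l r N ≡ 0 [MOD p] := by
  have := Fact.mk hp
  rw [Nat.modEq_zero_iff_dvd, ← ZMod.natCast_eq_zero_iff, B_eq_coeff (ZMod p)]
  set g := PowerSeries.mk fun m ↦ (#(Nat.Partition.restricted m (¬ l ∣ ·)) : ZMod p) with hg
  set f := pentagonalSeries (ZMod p)
  obtain ⟨k, hk⟩ := hrs
  obtain ⟨l', rfl⟩ := hpl
  have hl' : l' ≠ 0 := right_ne_zero_of_mul hl
  have hp0 := hp.ne_zero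
  have hgf : g * f = expand (p * l') hl f := genFun_mul_pentagonalSeries (ZMod p) hl
  have hfinv : f * f⁻¹ = 1 := PowerSeries.mul_inv_cancel _ (by
    rw [constantCoeff_pentagonalSeries]; exact one_ne_zero)
  have hfs : f ^ (r + s) * expand p hp0 (f⁻¹ ^ k) = 1 := by
    rw [hk, pow_mul, pow_char_eq_expand, ← map_pow, ← map_mul, ← mul_pow, hfinv, one_pow, map_one]
  have key : g ^ r = expand p hp0 (expand l' hl' f ^ r * f⁻¹ ^ k) * f ^ s := by
    calc g ^ r = g ^ r * (f ^ (r + s) * expand p hp0 (f⁻¹ ^ k)) := by rw [hfs, mul_one]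
      _ = (g * f) ^ r * expand p hp0 (f⁻¹ ^ k) * f ^ s := by ring
      _ = _ := by rw [hgf, expand_mul p hp0 l' hl', map_mul, map_pow (expand p hp0) (expand l' hl' f)]
  rw [key]
  exact coeff_expand_mul_eq_zero hp0 _ _ N h

/-! ### Modulo 11 -/

theorem coeff_pentagonalSeries_eleven (m : ℕ)
    (hm : m % 11 = 3 ∨ m % 11 = 6 ∨ m % 11 = 8 ∨ m % 11 = 9 ∨ m % 11 = 10) :
    coeff m (pentagonalSeries (ZMod 11)) = 0 := by
  refine coeff_pentagonalSeries_eq_zero _ ?_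
  rintro ⟨k, rfl⟩
  have h := congrArg (Int.cast : ℤ → ZMod 11) (two_mul_natCast_pentagonal k)
  push_cast at h
  have hc : ∀ x : ZMod 11, 2 * (3 : ZMod 11) ≠ x * (3 * x - 1) ∧ 2 * (6 : ZMod 11) ≠ x * (3 * x - 1)
    ∧ 2 * (8 : ZMod 11) ≠ x * (3 * x - 1) ∧ 2 * (9 : ZMod 11) ≠ x * (3 * x - 1)
    ∧ 2 * (10 : ZMod 11) ≠ x * (3 * x - 1) := by decide
  rw [← ZMod.natCast_mod] at h
  obtain ⟨h1, h2, h3, h4, h5⟩ := hc k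
  rcases hm with hm | hm | hm | hm | hm <;> rw [hm] at h <;> contradiction

/-! ### Modulo 5 -/

/-- The quadratic character modulo `12` attached to `ℚ(√3)`, with values in `ZMod 5`. -/
def chi (x : ZMod 12) : ZMod 5 :=
  if x = 1 ∨ x = 11 then 1 else if x = 5 ∨ x = 7 then -1 else 0

/-- The pentagonal number series as a theta series: `pentagonal k = m` corresponds to the two
square roots `± (6 k - 1)` of `24 m + 1`. The bound `M` only makes the range of summation finite. -/
theorem two_mul_coeff_pentagonalSeries (m : ℕ) (M : ℤ) (hM : 24 * (m : ℤ) + 1 ≤ M) :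
    2 * coeff m (pentagonalSeries (ZMod 5)) =
      ∑ x ∈ Icc (-M) M, if x ^ 2 = 24 * (m : ℤ) + 1 then chi x else 0 := by
  classical
  by_cases hm : ∃ k, pentagonal k = m
  · obtain ⟨k, rfl⟩ := hm
    have hk := two_mul_natCast_pentagonal k
    have hsq : ∀ x : ℤ, x ^ 2 = 24 * (pentagonal k : ℤ) + 1 ↔ x = 6 * k - 1 ∨ x = -(6 * k - 1) := by
      intro x
      rw [← sq_eq_sq_iff_eq_or_eq_neg, show 24 * (pentagonal k : ℤ) + 1 = (6 * k - 1) ^ 2 by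
        linear_combination 12 * hk]
    have hfil : (Icc (-M) M).filter (fun x ↦ x ^ 2 = 24 * (pentagonal k : ℤ) + 1) =
        {6 * k - 1, -(6 * k - 1)} := by
      ext x
      simp only [mem_filter, mem_Icc, mem_insert, mem_singleton, hsq, and_iff_right_iff_imp]
      intro hx
      have := (hsq x).2 hx
      constructor <;> nlinarith
    rw [← sum_filter, hfil, sum_pair (by omega), coeff_pentagonalSeries_pentagonal]
    rcases Int.even_or_odd' k with ⟨j, rfl | rfl⟩
    · have h1 : ((6 * (2 * j) - 1 : ℤ) : ZMod 12) = 11 := by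
        have : ((12 : ℤ) : ZMod 12) = 0 := by decide
        rw [show (6 * (2 * j) - 1 : ℤ) = 12 * (j - 1) + 11 by ring]
        push_cast at this ⊢; rw [this]; ring
      rw [Int.cast_neg, h1, Int.negOnePow_even _ (by simp)]
      decide
    · have h1 : ((6 * (2 * j + 1) - 1 : ℤ) : ZMod 12) = 5 := by
        have : ((12 : ℤ) : ZMod 12) = 0 := by decide
        rw [show (6 * (2 * j + 1) - 1 : ℤ) = 12 * j + 5 by ring]
        push_cast at this ⊢; rw [this]; ring
      rw [Int.cast_neg, h1, Int.negOnePow_odd _ (by simp)]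
      decide
  · rw [coeff_pentagonalSeries_eq_zero _ (by simpa using hm), mul_zero]
    symm
    refine sum_eq_zero fun x _ ↦ if_neg fun hx ↦ hm ?_
    have h6 : x % 6 = 5 ∨ x % 6 = 1 := by
      have h1 : x ^ 2 % 6 = 1 := by omega
      have h2 : x % 6 = 0 ∨ x % 6 = 1 ∨ x % 6 = 2 ∨ x % 6 = 3 ∨ x % 6 = 4 ∨ x % 6 = 5 := by omega
      rcases h2 with h | h | h | h | h | h <;> simp [pow_two, Int.mul_emod, h] at h1 <;> simp [h]
    rcases h6 with h | h
    · refine ⟨(x + 1) / 6, ?_⟩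
      have hk := two_mul_natCast_pentagonal ((x + 1) / 6)
      obtain ⟨k, hk'⟩ : ∃ k, (x + 1) / 6 = k := ⟨_, rfl⟩
      obtain rfl : x = 6 * k - 1 := by omega
      rw [hk'] at hk ⊢
      zify; nlinarith
    · refine ⟨(1 - x) / 6, ?_⟩
      have hk := two_mul_natCast_pentagonal ((1 - x) / 6)
      obtain ⟨k, hk'⟩ : ∃ k, (1 - x) / 6 = k := ⟨_, rfl⟩
      obtain rfl : x = 1 - 6 * k := by omega
      rw [hk'] at hk ⊢
      zify; nlinarith

/-- The factors are the coordinates of `(2 + i)(v + i u)` and of `(2 + i)(u + i v)`. -/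
theorem chi_reflect : ∀ u v : ZMod 12, 5 * (u ^ 2 + v ^ 2) = 2 →
    chi (2 * v - u) * chi (v + 2 * u) = - (chi (2 * u - v) * chi (u + 2 * v)) := by
  decide

theorem chi_neg : ∀ x : ZMod 12, chi (-x) = chi x := by decide

/-- The sum of `χ(x) χ(y)` over the multiples `x + i y` of `2 + i` of norm `24 n + 2` vanishes. -/
theorem sum_chi_eq_zero (n : ℕ) (M : ℤ) (hM : 24 * (n : ℤ) + 2 ≤ M) :
    ∑ z ∈ (Icc (-M) M ×ˢ Icc (-M) M).filter
      (fun z : ℤ × ℤ ↦ z.1 ^ 2 + z.2 ^ 2 = 24 * (n : ℤ) + 2 ∧ (5 : ℤ) ∣ z.2 + 2 * z.1),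
      chi z.1 * chi z.2 = 0 := by
  have hmem : ∀ z : ℤ × ℤ, z ∈ (Icc (-M) M ×ˢ Icc (-M) M).filter
      (fun z : ℤ × ℤ ↦ z.1 ^ 2 + z.2 ^ 2 = 24 * (n : ℤ) + 2 ∧ (5 : ℤ) ∣ z.2 + 2 * z.1) ↔
      z.1 ^ 2 + z.2 ^ 2 = 24 * (n : ℤ) + 2 ∧ (5 : ℤ) ∣ z.2 + 2 * z.1 := by
    rintro ⟨x, y⟩
    simp only [mem_filter, mem_product, mem_Icc, and_iff_right_iff_imp, and_imp]
    intro h _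
    refine ⟨⟨?_, ?_⟩, ?_, ?_⟩ <;> nlinarith [sq_nonneg x, sq_nonneg y]
  have hpar : ∀ z : ℤ × ℤ, (5 : ℤ) ∣ z.2 + 2 * z.1 → ∃ u v : ℤ, z = (2 * u - v, u + 2 * v) := by
    rintro ⟨x, y⟩ ⟨u, hu⟩
    dsimp only at hu
    exact ⟨u, 2 * u - x, by ext <;> dsimp only <;> omega⟩
  -- The swap of `u` and `v`, expressed in the coordinates `x` and `y`.
  let σ : ℤ × ℤ → ℤ × ℤ := fun z ↦ ((3 * z.2 - 4 * z.1) / 5, (3 * z.1 + 4 * z.2) / 5)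
  have hσ : ∀ u v : ℤ, σ (2 * u - v, u + 2 * v) = (2 * v - u, v + 2 * u) := by
    intro u v
    ext <;> dsimp only [σ] <;> omega
  have hneg : ∀ u v : ℤ, (2 * u - v) ^ 2 + (u + 2 * v) ^ 2 = 24 * (n : ℤ) + 2 →
      chi ((2 * v - u : ℤ) : ZMod 12) * chi ((v + 2 * u : ℤ) : ZMod 12) =
        -(chi ((2 * u - v : ℤ) : ZMod 12) * chi ((u + 2 * v : ℤ) : ZMod 12)) := by
    intro u v h
    have h' := congrArg (Int.cast : ℤ → ZMod 12) h
    push_cast at h' ⊢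
    apply chi_reflect
    have h24 : (24 : ZMod 12) = 0 := by decide
    rw [h24] at h'
    linear_combination h'
  refine sum_involution (fun z _ ↦ σ z) ?_ ?_ ?_ ?_
  · intro z hz
    obtain ⟨h1, h2⟩ := (hmem z).1 hz
    obtain ⟨u, v, rfl⟩ := hpar z h2
    rw [hσ, hneg u v h1, add_neg_cancel]
  · intro z hz hne heq
    obtain ⟨h1, h2⟩ := (hmem z).1 hz
    obtain ⟨u, v, rfl⟩ := hpar z h2
    have h3 := hneg u v h1
    rw [hσ, Prod.mk.injEq] at heq
    rw [heq.1, heq.2] at h3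
    have hself : ∀ a : ZMod 5, a = -a → a = 0 := by decide
    exact hne (hself _ h3)
  · intro z hz
    obtain ⟨h1, h2⟩ := (hmem z).1 hz
    obtain ⟨u, v, rfl⟩ := hpar z h2
    rw [hmem, hσ]
    exact ⟨by linear_combination h1, v, by ring⟩
  · intro z hz
    obtain ⟨h1, h2⟩ := (hmem z).1 hz
    obtain ⟨u, v, rfl⟩ := hpar z h2
    rw [hσ, hσ]

theorem sum_chi_eq_zero' (n : ℕ) (M : ℤ) (hM : 24 * (n : ℤ) + 2 ≤ M) :
    ∑ z ∈ (Icc (-M) M ×ˢ Icc (-M) M).filter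
      (fun z : ℤ × ℤ ↦ z.1 ^ 2 + z.2 ^ 2 = 24 * (n : ℤ) + 2 ∧ (5 : ℤ) ∣ z.2 - 2 * z.1),
      chi z.1 * chi z.2 = 0 := by
  rw [← sum_chi_eq_zero n M hM]
  refine sum_nbij' (fun z ↦ (z.1, -z.2)) (fun z ↦ (z.1, -z.2)) ?_ ?_ ?_ ?_ ?_
  · rintro ⟨x, y⟩ h
    simp only [mem_filter, mem_product, mem_Icc, neg_sq] at h ⊢
    omega
  · rintro ⟨x, y⟩ h
    simp only [mem_filter, mem_product, mem_Icc, neg_sq] at h ⊢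
    omega
  · simp
  · simp
  · rintro ⟨x, y⟩ -
    simp [chi_neg]

/-- The part of the pentagonal number series over `ZMod 5` with exponents `≡ r (mod 5)`. -/
noncomputable def part (r : ℕ) : (ZMod 5)⟦X⟧ :=
  PowerSeries.mk fun m ↦ if m % 5 = r then coeff m (pentagonalSeries (ZMod 5)) else 0

theorem sq_residue (i : ℕ) (x : ℤ) (h : x ^ 2 = 24 * (i : ℤ) + 1) :
    (i % 5 = 1 ∧ x % 5 = 0) ∨ (i % 5 = 0 ∧ (x % 5 = 1 ∨ x % 5 = 4)) ∨
      (i % 5 = 2 ∧ (x % 5 = 2 ∨ x % 5 = 3)) := by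
  have h5 : x ^ 2 % 5 = (24 * (i : ℤ) + 1) % 5 := by rw [h]
  have hx : x % 5 = 0 ∨ x % 5 = 1 ∨ x % 5 = 2 ∨ x % 5 = 3 ∨ x % 5 = 4 := by omega
  rcases hx with hx | hx | hx | hx | hx <;> simp [pow_two, Int.mul_emod, hx] at h5 <;> omega

theorem exists_sq_of_chi_ne_zero (x : ℤ) (h : chi x ≠ 0) : ∃ i : ℕ, x ^ 2 = 24 * (i : ℤ) + 1 := by
  have h12 : ∀ y : ZMod 12, chi y ≠ 0 → y = 1 ∨ y = 11 ∨ y = 5 ∨ y = 7 := by decide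
  have hx : x % 12 = 1 ∨ x % 12 = 11 ∨ x % 12 = 5 ∨ x % 12 = 7 := by
    have key : ∀ c : ℤ, (x : ZMod 12) = (c : ZMod 12) → x % 12 = c % 12 := fun c hc ↦
      (ZMod.intCast_eq_intCast_iff x c 12).1 hc
    rcases h12 _ h with h | h | h | h
    · exact Or.inl (key 1 (by exact_mod_cast h))
    · exact Or.inr (Or.inl (key 11 (by exact_mod_cast h)))
    · exact Or.inr (Or.inr (Or.inl (key 5 (by exact_mod_cast h))))
    · exact Or.inr (Or.inr (Or.inr (key 7 (by exact_mod_cast h))))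
  have h24 : x ^ 2 % 24 = 1 := by
    have : x % 24 = 1 ∨ x % 24 = 11 ∨ x % 24 = 5 ∨ x % 24 = 7 ∨ x % 24 = 13 ∨ x % 24 = 23 ∨
      x % 24 = 17 ∨ x % 24 = 19 := by omega
    rcases this with h | h | h | h | h | h | h | h <;> simp [pow_two, Int.mul_emod, h]
  have := sq_nonneg x
  exact ⟨(x ^ 2 / 24).toNat, by omega⟩

/-- The multiplicity of the exponent pair `(i, j)` in the expansion of
`part 0 * part 2 + part 2 * part 0 + 2 * part 1 ^ 2`. -/
def expWeight (p : ℕ × ℕ) : ZMod 5 :=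
  (if p.1 % 5 = 0 ∧ p.2 % 5 = 2 then 1 else 0) + (if p.1 % 5 = 2 ∧ p.2 % 5 = 0 then 1 else 0) +
    if p.1 % 5 = 1 ∧ p.2 % 5 = 1 then 2 else 0

/-- The number of the two prime ideals `(2 + i)`, `(2 - i)` above `5` that contain the Gaussian
integer `x + i y`. -/
def latWeight (x y : ℤ) : ZMod 5 :=
  (if (5 : ℤ) ∣ y + 2 * x then 1 else 0) + if (5 : ℤ) ∣ y - 2 * x then 1 else 0

theorem expWeight_eq_latWeight (i j : ℕ) (x y : ℤ) (hx : x ^ 2 = 24 * (i : ℤ) + 1)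
    (hy : y ^ 2 = 24 * (j : ℤ) + 1) : expWeight (i, j) = latWeight x y := by
  have hdiv : latWeight x y = (if (y % 5 + 2 * (x % 5)) % 5 = 0 then 1 else 0) +
      if (y % 5 - 2 * (x % 5)) % 5 = 0 then 1 else 0 := by
    simp only [latWeight, Int.dvd_iff_emod_eq_zero]
    congr 3 <;> simp [Int.add_emod, Int.sub_emod, Int.mul_emod]
  rw [hdiv, expWeight]
  rcases sq_residue i x hx with ⟨hi, hx⟩ | ⟨hi, hx | hx⟩ | ⟨hi, hx | hx⟩ <;>
    rcases sq_residue j y hy with ⟨hj, hy⟩ | ⟨hj, hy | hy⟩ | ⟨hj, hy | hy⟩ <;>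
    simp only [hi, hj, hx, hy] <;> rfl

/-- The coefficients of `8 (P R + Q²)`, for `P, Q, R = part 0, part 1, part 2`, are sums of
`χ(x) χ(y)` over Gaussian integers `x + i y`, weighted by the number of the primes `2 + i`, `2 - i`
that divide `x + i y`. -/
theorem part_relation : part 0 * part 2 + part 1 ^ 2 = 0 := by
  ext n
  set a : ℕ → ZMod 5 := fun m ↦ coeff m (pentagonalSeries (ZMod 5)) with ha
  have h1 : coeff n (part 0 * part 2 + part 2 * part 0 + 2 * part 1 ^ 2) =
      ∑ p ∈ HasAntidiagonal.antidiagonal n, expWeight p * (a p.1 * a p.2) := by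
    rw [two_mul, pow_two, map_add, map_add, map_add, coeff_mul, coeff_mul, coeff_mul,
      ← sum_add_distrib, ← sum_add_distrib, ← sum_add_distrib]
    refine sum_congr rfl fun p _ ↦ ?_
    simp only [part, coeff_mk, expWeight, ha]
    split_ifs <;> first | omega | ring
  let M : ℤ := 24 * (n : ℤ) + 2
  have h2 : 4 * ∑ p ∈ HasAntidiagonal.antidiagonal n, expWeight p * (a p.1 * a p.2) =
      ∑ z ∈ Icc (-M) M ×ˢ Icc (-M) M, if z.1 ^ 2 + z.2 ^ 2 = 24 * (n : ℤ) + 2 then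
        latWeight z.1 z.2 * (chi z.1 * chi z.2) else 0 := by
    have hterm : ∀ p ∈ HasAntidiagonal.antidiagonal n, 4 * (expWeight p * (a p.1 * a p.2)) =
        ∑ z ∈ Icc (-M) M ×ˢ Icc (-M) M,
          if z.1 ^ 2 = 24 * (p.1 : ℤ) + 1 ∧ z.2 ^ 2 = 24 * (p.2 : ℤ) + 1 then
            expWeight p * (chi z.1 * chi z.2) else 0 := by
      intro p hp
      rw [HasAntidiagonal.mem_antidiagonal] at hp
      rw [show 4 * (expWeight p * (a p.1 * a p.2)) =
        expWeight p * ((2 * a p.1) * (2 * a p.2)) by ring]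
      simp only [ha]
      rw [two_mul_coeff_pentagonalSeries p.1 M (by omega),
        two_mul_coeff_pentagonalSeries p.2 M (by omega), sum_mul_sum, mul_sum, sum_product]
      refine sum_congr rfl fun x _ ↦ ?_
      rw [mul_sum]
      refine sum_congr rfl fun y _ ↦ ?_
      dsimp only
      split_ifs <;> first | tauto | simp
    rw [mul_sum, sum_congr rfl hterm, sum_comm]
    refine sum_congr rfl fun z _ ↦ ?_
    by_cases hz : chi z.1 * chi z.2 = 0
    · simp [hz]
    obtain ⟨i, hi⟩ := exists_sq_of_chi_ne_zero z.1 (left_ne_zero_of_mul hz)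
    obtain ⟨j, hj⟩ := exists_sq_of_chi_ne_zero z.2 (right_ne_zero_of_mul hz)
    split_ifs with hn
    · rw [sum_eq_single (i, j)]
      · rw [if_pos ⟨hi, hj⟩, expWeight_eq_latWeight i j z.1 z.2 hi hj]
      · rintro ⟨i', j'⟩ - hne
        refine if_neg fun h ↦ hne ?_
        ext <;> dsimp only at h ⊢ <;> omega
      · intro h
        rw [HasAntidiagonal.mem_antidiagonal] at h
        dsimp only at h
        omega
    · refine sum_eq_zero fun p hp ↦ if_neg fun h ↦ hn ?_
      rw [HasAntidiagonal.mem_antidiagonal] at hp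
      omega
  have h3 : ∑ z ∈ Icc (-M) M ×ˢ Icc (-M) M, (if z.1 ^ 2 + z.2 ^ 2 = 24 * (n : ℤ) + 2 then
        latWeight z.1 z.2 * (chi z.1 * chi z.2) else 0) = 0 := by
    have e1 := sum_chi_eq_zero n M le_rfl
    have e2 := sum_chi_eq_zero' n M le_rfl
    rw [sum_filter] at e1 e2
    have e := congrArg₂ (· + ·) e1 e2
    rw [← sum_add_distrib, add_zero] at e
    refine Eq.trans (sum_congr rfl fun z _ ↦ ?_) e
    by_cases hN : z.1 ^ 2 + z.2 ^ 2 = 24 * (n : ℤ) + 2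
    · simp only [latWeight, hN, true_and, if_true]
      split_ifs <;> ring
    · simp only [hN, false_and, if_false, add_zero]
  have hfin : ∀ c : ZMod 5, 4 * (c + c) = 0 → c = 0 := by decide
  rw [map_zero]
  apply hfin
  rw [← map_add, show part 0 * part 2 + part 1 ^ 2 + (part 0 * part 2 + part 1 ^ 2) =
    part 0 * part 2 + part 2 * part 0 + 2 * part 1 ^ 2 by ring, h1, h2, h3]

/-- All nonzero coefficients of `φ` sit in degrees `≡ r (mod 5)`. -/
def Supp (r : ℕ) (φ : (ZMod 5)⟦X⟧) : Prop := ∀ n, n % 5 ≠ r % 5 → coeff n φ = 0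

theorem Supp.mul {r s : ℕ} {φ ψ : (ZMod 5)⟦X⟧} (hφ : Supp r φ) (hψ : Supp s ψ) :
    Supp (r + s) (φ * ψ) := by
  intro n hn
  rw [coeff_mul]
  refine sum_eq_zero fun p hp ↦ ?_
  rw [HasAntidiagonal.mem_antidiagonal] at hp
  by_cases h : p.1 % 5 = r % 5
  · rw [hψ p.2 (by omega), mul_zero]
  · rw [hφ p.1 h, zero_mul]

theorem supp_part (r : ℕ) (hr : r < 5) : Supp r (part r) := by
  intro n hn
  rw [Nat.mod_eq_of_lt hr] at hn
  simp [part, hn]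

theorem pentagonalSeries_eq_parts : pentagonalSeries (ZMod 5) = part 0 + part 1 + part 2 := by
  ext m
  simp only [part, map_add, coeff_mk]
  have h : coeff m (pentagonalSeries (ZMod 5)) = 0 ∨ m % 5 = 0 ∨ m % 5 = 1 ∨ m % 5 = 2 := by
    by_cases hm : m ∈ Set.range pentagonal
    · right
      obtain ⟨k, rfl⟩ := hm
      have hk := two_mul_natCast_pentagonal k
      have := sq_residue (pentagonal k) (6 * k - 1) (by linear_combination -12 * hk)
      omega
    · exact Or.inl (coeff_pentagonalSeries_eq_zero _ hm)
  rcases h with h | h | h | h <;> simp [h]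

theorem coeff_pentagonalSeries_pow_four (m : ℕ) (hm : m % 5 = 4) :
    coeff m (pentagonalSeries (ZMod 5) ^ 4) = 0 := by
  have hrel := part_relation
  have h0 := supp_part 0 (by norm_num)
  have h1 := supp_part 1 (by norm_num)
  have h2 := supp_part 2 (by norm_num)
  have h5 : (5 : (ZMod 5)⟦X⟧) = 0 := by
    rw [← map_ofNat (C (R := ZMod 5)), show (OfNat.ofNat 5 : ZMod 5) = 0 from rfl, map_zero]
  rw [pentagonalSeries_eq_parts]
  set P := part 0
  set Q := part 1
  set R := part 2
  -- Multinomial expansion grouped by degrees modulo `5`; the terms in degrees `≡ 4` add up to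
  -- `(P * R + Q ^ 2) ^ 2` modulo `5` and are dropped.
  have hexp : (P + Q + R) ^ 4 =
      (P * P * P * P + 12 • (P * Q * R * R) + 4 • (Q * Q * Q * R)) +
      (4 • (P * P * P * Q) + 4 • (P * R * R * R) + 6 • (Q * Q * R * R)) +
      (4 • (P * P * P * R) + 6 • (P * P * Q * Q) + 4 • (Q * R * R * R)) +
      (12 • (P * P * Q * R) + 4 • (P * Q * Q * Q) + R * R * R * R) := by
    simp only [nsmul_eq_mul]
    push_cast
    linear_combination (P * R + Q ^ 2) * hrel + (2 * P * Q ^ 2 * R + P ^ 2 * R ^ 2) * h5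
  rw [hexp]
  simp only [map_add, map_nsmul]
  rw [((h0.mul h0).mul h0).mul h0 m (by omega), ((h0.mul h1).mul h2).mul h2 m (by omega),
    ((h1.mul h1).mul h1).mul h2 m (by omega), ((h0.mul h0).mul h0).mul h1 m (by omega),
    ((h0.mul h2).mul h2).mul h2 m (by omega), ((h1.mul h1).mul h2).mul h2 m (by omega),
    ((h0.mul h0).mul h0).mul h2 m (by omega), ((h0.mul h0).mul h1).mul h1 m (by omega),
    ((h1.mul h2).mul h2).mul h2 m (by omega), ((h0.mul h0).mul h1).mul h2 m (by omega),
    ((h0.mul h1).mul h1).mul h1 m (by omega), ((h2.mul h2).mul h2).mul h2 m (by omega)]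
  simp

/-! ### The congruence modulo 55 -/

theorem stmt_17 (n t : ℕ) (α : ℕ)
    (hα : α ∈ ({9, 14, 19, 39, 54} : Finset ℕ)) :
    B 55 (55 * t + 21) (55 * n + α) ≡ 0 [MOD 55] := by
  simp only [mem_insert, mem_singleton] at hα
  have h5 : B 55 (55 * t + 21) (55 * n + α) ≡ 0 [MOD 5] :=
    B_modEq_zero (s := 4) (by norm_num) (by norm_num) (by norm_num) (by omega)
      fun m hm ↦ coeff_pentagonalSeries_pow_four m (by omega)
  have h11 : B 55 (55 * t + 21) (55 * n + α) ≡ 0 [MOD 11] :=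
    B_modEq_zero (s := 1) (by norm_num) (by norm_num) (by norm_num) (by omega)
      fun m hm ↦ by rw [pow_one]; exact coeff_pentagonalSeries_eleven m (by omega)
  exact (Nat.modEq_and_modEq_iff_modEq_mul (by norm_num)).1 ⟨h5, h11⟩
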